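/- arXiv:1306.3707 — 3 statements merged into one kernel-verified Lean document; each statement's English description precedes it below -/
import Mathlib

section
/- For every integer k ≥ 2 and every utilization ρ with 0 < ρ < 1/k, the inequality 1/(k(1 - kρ)) < 1/(1 - ρ) holds if and only if ρ < 1/(k + 1). (Generalization of Theorem 1 to k-way replication with exponential service: the threshold load is 1/(k+1).) -/
/-- Generalization of Theorem 1 to `k`-way replication with unit-mean exponential
service: for every integer `k ≥ 2` and utilization `0 < ρ < 1/k`, the replicated mean
response time `1/(k(1-kρ))` beats the unreplicated one `1/(1-ρ)` iff `ρ < 1/(k+1)`. -/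
theorem threshold_load_k_replication (k : ℕ) (hk : 2 ≤ k) (ρ : ℝ) (h0 : 0 < ρ)
    (h1 : ρ < 1 / (k : ℝ)) :
    1 / ((k : ℝ) * (1 - (k : ℝ) * ρ)) < 1 / (1 - ρ) ↔ ρ < 1 / ((k : ℝ) + 1) := by
  have hk2 : (2 : ℝ) ≤ (k : ℝ) := by exact_mod_cast hk
  have hk0 : (0 : ℝ) < (k : ℝ) := by linarith
  have h2 : ρ * (k : ℝ) < 1 := (lt_div_iff₀ hk0).mp h1
  have h3 : 0 < 1 - ρ := by nlinarith
  have h4 : 0 < (k : ℝ) * (1 - (k : ℝ) * ρ) := mul_pos hk0 (by linarith)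
  have key : (k : ℝ) * (1 - (k : ℝ) * ρ) - (1 - ρ)
      = ((k : ℝ) - 1) * (1 - ρ * ((k : ℝ) + 1)) := by ring
  rw [one_div_lt_one_div h4 h3, lt_div_iff₀ (by linarith), ← sub_pos, key,
    mul_pos_iff_of_pos_left (by linarith), sub_pos]
end

section
/- In the unit-mean exponential-service model with 2-way replication and a fixed client-side overhead c per replicated request: if c ≥ 1/2, then for every ρ with 0 ≤ ρ < 1/2, the replicated mean response time with overhead satisfies c + 1/(2(1 - 2ρ)) ≥ 1/(1 - ρ); that is, replication never strictly improves mean response time at any load. -/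
/-- With unit-mean exponential service, 2-way replication and a fixed client-side
overhead `c ≥ 1/2` per replicated request, replication never strictly improves mean
response time: for every load `0 ≤ ρ < 1/2`, `c + 1/(2(1-2ρ)) ≥ 1/(1-ρ)`. -/
theorem overhead_kills_replication (c : ℝ) (hc : 1 / 2 ≤ c) :
    ∀ ρ : ℝ, 0 ≤ ρ → ρ < 1 / 2 → c + 1 / (2 * (1 - 2 * ρ)) ≥ 1 / (1 - ρ) := by
  intro ρ h0 h1
  have ha : 0 < 1 - 2 * ρ := by linarith
  have hb : 0 < 1 - ρ := by linarith
  have e : 1 / 2 + 1 / (2 * (1 - 2 * ρ)) = (1 - ρ) / (1 - 2 * ρ) := by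
    have := ha.ne'
    rw [div_add_div _ _ two_ne_zero (by positivity), div_eq_div_iff (by positivity) this]
    ring
  have k : 1 / (1 - ρ) ≤ (1 - ρ) / (1 - 2 * ρ) := by
    rw [div_le_div_iff₀ hb ha]
    nlinarith [sq_nonneg ρ]
  linarith
end

section
/- In the unit-mean exponential-service model with 2-way replication and a fixed client-side overhead c per replicated request: if 0 ≤ c < 1/2, then there exists ρ₀ with 0 < ρ₀ < 1/2 such that for all ρ with 0 ≤ ρ < ρ₀, c + 1/(2(1 - 2ρ)) < 1/(1 - ρ); that is, replication strictly improves mean response time at all sufficiently low loads. -/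
/-- With unit-mean exponential service, 2-way replication and a fixed client-side
overhead `0 ≤ c < 1/2` per replicated request, replication strictly improves mean
response time at all sufficiently low loads: there is a threshold `ρ₀ ∈ (0, 1/2)`
such that `c + 1/(2(1-2ρ)) < 1/(1-ρ)` whenever `0 ≤ ρ < ρ₀`. -/
theorem small_overhead_positive_threshold (c : ℝ) (hc0 : 0 ≤ c) (hc : c < 1 / 2) :
    ∃ ρ₀ : ℝ, 0 < ρ₀ ∧ ρ₀ < 1 / 2 ∧
      ∀ ρ : ℝ, 0 ≤ ρ → ρ < ρ₀ → c + 1 / (2 * (1 - 2 * ρ)) < 1 / (1 - ρ) := by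
  refine ⟨(1 - 2 * c) / 4, by linarith, by linarith, ?_⟩
  intro ρ h0 h1
  have h2 : 1 ≤ 1 / (1 - ρ) := by
    rw [le_div_iff₀ (by linarith)]
    linarith
  have h3 : 1 / (2 * (1 - 2 * ρ)) < 1 - c := by
    rw [div_lt_iff₀ (by linarith)]
    have h4 : 0 < (1 - c) * ((1 - 2 * c) / 4 - ρ) :=
      mul_pos (by linarith) (by linarith)
    have h5 : 0 ≤ c * (1 - 2 * c) := mul_nonneg hc0 (by linarith)
    nlinarith
  linarith
end
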